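/- Let N := {(a₁,a₂,a₃,a₄) ∈ ℤ⁴ : a₁+a₂+a₃+a₄ = 0}, and let Q be the free ℤ-module on four generators e₁₃, e₂₃, e₁₄, e₂₄. Define ℤ-linear maps φ : ℤ → Q by φ(1) := e₁₃ − e₂₃ − e₁₄ + e₂₄, and π : Q → N by π(e_{ij}) := eᵢ − eⱼ (where e₁,…,e₄ is the standard basis of ℤ⁴). Then the sequence 0 → ℤ → Q → N → 0 is exact: φ is injective, π is surjective onto N, and ker π = im φ. Moreover, let V := ⟨(1 2),(3 4)⟩ ⊆ S₄ act ℤ-linearly on Q by g·e_{ij} := e_{g(i)g(j)} and on N by permuting coordinates; then π is V-equivariant, and for every g ∈ V one has g·φ(1) = sgn(g)·φ(1), where sgn denotes the sign of the permutation. -/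

import Mathlib

/-- The Klein four-subgroup `V = ⟨(1 2), (3 4)⟩` of `S₄` (with `{1,2,3,4}` encoded as
`{0,1,2,3} = Fin 4`). -/
def V : Subgroup (Equiv.Perm (Fin 4)) :=
  Subgroup.closure {Equiv.swap 0 1, Equiv.swap 2 3}

/-- Encoding of the first indices: `1 ↦ 0`, `2 ↦ 1`. -/
def emb1 : Fin 2 → Fin 4 := ![0, 1]

/-- Encoding of the second indices: `3 ↦ 2`, `4 ↦ 3`. -/
def emb2 : Fin 2 → Fin 4 := ![2, 3]

/-- `Q` is the free `ℤ`-module on the four generators `e₁₃, e₂₃, e₁₄, e₂₄`; the generator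
`e_{ij}` (with `i ∈ {1,2}`, `j ∈ {3,4}`) is `eQ (i, j)` under the above encoding. -/
def eQ (p : Fin 2 × Fin 2) : Fin 2 × Fin 2 → ℤ := Pi.single p 1

/-- `N = {(a₁,a₂,a₃,a₄) ∈ ℤ⁴ : a₁+a₂+a₃+a₄ = 0}`. -/
def Nlat : Submodule ℤ (Fin 4 → ℤ) :=
  LinearMap.ker (∑ i : Fin 4, LinearMap.proj i)

/-!
`Q` is the lattice of `1`-chains of the complete bipartite graph on `{1, 2}` and `{3, 4}`, and `π`
is its boundary map. The graph is connected, so the image of `π` consists of the vectors with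
coordinate sum zero. It is a cycle of length four, so `ker π` is generated by its fundamental
cycle `φ(1)`: a `2 × 2` array with vanishing row and column sums is determined by one entry. Each of
the two generators of `V` is a graph automorphism reversing that cycle.
-/

open Equiv.Perm (sign)

section Action

variable {G X E : Type*} [Group G] [MulAction G X]

/-- The action of `G` on `E` obtained by identifying `E` with a `G`-stable subset of `X` through
the injection `f`, given as a homomorphism to the permutations of `E`. -/
noncomputable def permHomOfInjective (f : E → X) (hf : Function.Injective f)
    (hstable : ∀ (g : G), ∀ x ∈ Set.range f, g • x ∈ Set.range f) : G →* Equiv.Perm E :=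
  (Equiv.ofInjective f hf).symm.permCongrHom.toMonoidHom.comp
    (MulAction.toPermHom G (⟨Set.range f, fun g {x} => hstable g x⟩ : SubMulAction G X))

lemma apply_permHomOfInjective {f : E → X} (hf : Function.Injective f)
    (hstable : ∀ (g : G), ∀ x ∈ Set.range f, g • x ∈ Set.range f) (g : G) (e : E) :
    f (permHomOfInjective f hf hstable g e) = g • f e :=
  Equiv.apply_ofInjective_symm hf _

lemma apply_eq_smul_of_closure_eq_top {R M : Type*} [CommSemiring R] [AddCommMonoid M] [Module R M]
    (ρ : G →* (M ≃ₗ[R] M)) (χ : G →* Rˣ) {m : M} {S : Set G} (hS : Subgroup.closure S = ⊤)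
    (h : ∀ s ∈ S, ρ s m = (χ s : R) • m) (g : G) : ρ g m = (χ g : R) • m := by
  have hg : g ∈ Subgroup.closure S := hS ▸ Subgroup.mem_top g
  induction hg using Subgroup.closure_induction with
  | mem s hs => exact h s hs
  | one => simp
  | mul x y _ _ hx hy =>
    rw [map_mul, LinearEquiv.mul_apply, hy, map_smul, hx, smul_smul, map_mul, Units.val_mul,
      mul_comm]
  | inv x _ hx =>
    apply (ρ x).injective
    rw [← LinearEquiv.mul_apply, ← map_mul, mul_inv_cancel, map_one, map_smul, hx, smul_smul,
      map_inv, Units.inv_mul, one_smul, LinearEquiv.coe_one, id]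

end Action

section PermRep

variable (R : Type*) {E : Type*} [Semiring R]

/-- The permutation representation of the symmetric group of `E` on `E → R`. The inverse makes it
send the basis vector at `e` to the one at `σ e`. -/
def permRep : Equiv.Perm E →* ((E → R) ≃ₗ[R] (E → R)) where
  toFun σ := LinearEquiv.funCongrLeft R R σ⁻¹
  map_one' := rfl
  map_mul' _ _ := rfl

lemma permRep_toLinearMap (σ : Equiv.Perm E) :
    (permRep R σ).toLinearMap = LinearMap.funLeft R R ⇑σ⁻¹ := rfl

lemma permRep_single [DecidableEq E] (σ : Equiv.Perm E) (e : E) (r : R) :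
    permRep R σ (Pi.single e r) = Pi.single (σ e) r := by
  ext x
  change Pi.single (M := fun _ => R) e r (σ⁻¹ x) = _
  simp only [Pi.single_apply, Equiv.Perm.inv_eq_iff_eq]

end PermRep

section Boundary

variable (R : Type*) {E X : Type*} [CommRing R] [Fintype E] [DecidableEq X]

/-- The boundary map from `1`-chains to `0`-chains, with coefficients in `R`, of the directed graph
with edges `E`, vertices `X`, source map `s` and target map `t`; it sends an edge to its source
minus its target. -/
def boundary (s t : E → X) : (E → R) →ₗ[R] (X → R) :=
  Fintype.linearCombination R fun e => Pi.single (s e) 1 - Pi.single (t e) 1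

variable {R}

lemma boundary_single [DecidableEq E] (s t : E → X) (e : E) :
    boundary R s t (Pi.single e 1) = Pi.single (s e) 1 - Pi.single (t e) 1 := by
  rw [boundary, Fintype.linearCombination_apply_single, one_smul]

lemma boundary_apply (s t : E → X) (f : E → R) (x : X) :
    boundary R s t f x = ∑ e, f e * ((Pi.single (s e) 1 - Pi.single (t e) 1 : X → R) x) := by
  simp [boundary, Fintype.linearCombination_apply]

lemma boundary_comp_permRep {s t : E → X} {σ : Equiv.Perm E} {τ : Equiv.Perm X}
    (hs : ∀ e, s (σ e) = τ (s e)) (ht : ∀ e, t (σ e) = τ (t e)) :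
    boundary R s t ∘ₗ (permRep R σ).toLinearMap =
      (permRep R τ).toLinearMap ∘ₗ boundary R s t := by
  classical
  ext1 e
  ext1
  simp [permRep_single, boundary_single, hs, ht]

lemma single_sub_single_mem_range_boundary {s t : E → X} {x y : X}
    (hxy : Relation.EqvGen (fun a b => ∃ e, s e = a ∧ t e = b) x y) :
    Pi.single x 1 - Pi.single y 1 ∈ LinearMap.range (boundary R s t) := by
  classical
  induction hxy with
  | rel _ _ h =>
    obtain ⟨e, rfl, rfl⟩ := h
    exact ⟨Pi.single e 1, boundary_single s t e⟩
  | refl _ => simp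
  | symm _ _ _ ih => simpa using neg_mem ih
  | trans _ _ _ _ _ ih₁ ih₂ => simpa using add_mem ih₁ ih₂

lemma range_boundary_eq_ker_sum [Fintype X] {s t : E → X} (x₀ : X)
    (hconn : ∀ x, Relation.EqvGen (fun a b => ∃ e, s e = a ∧ t e = b) x x₀) :
    LinearMap.range (boundary R s t) = LinearMap.ker (∑ x, LinearMap.proj (φ := fun _ => R) x) := by
  classical
  apply le_antisymm
  · rw [LinearMap.range_le_ker_iff]
    ext e
    simp [boundary_single]
  · intro a ha
    have hsum : ∑ x, a x = 0 := by simpa using ha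
    have hdecomp : a = ∑ x, a x • (Pi.single x 1 - Pi.single x₀ 1 : X → R) := by
      simp only [smul_sub, Finset.sum_sub_distrib, ← Finset.sum_smul, hsum, zero_smul, sub_zero]
      exact pi_eq_sum_univ' a
    rw [hdecomp]
    exact sum_mem fun x _ =>
      Submodule.smul_mem _ _ (single_sub_single_mem_range_boundary (hconn x))

variable {α β : Type*} [Fintype α] [Fintype β] {u : α → X} {w : β → X}

lemma boundary_bipartite_apply_left (hu : Function.Injective u) (huw : ∀ i j, u i ≠ w j)
    (f : α × β → R) (i : α) :
    boundary R (fun p => u p.1) (fun p => w p.2) f (u i) = ∑ j, f (i, j) := by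
  classical
  simp [boundary_apply, Fintype.sum_prod_type_right, Pi.single_apply, hu.eq_iff, huw]

lemma boundary_bipartite_apply_right (hw : Function.Injective w) (huw : ∀ i j, u i ≠ w j)
    (f : α × β → R) (j : β) :
    boundary R (fun p => u p.1) (fun p => w p.2) f (w j) = -∑ i, f (i, j) := by
  classical
  simp [boundary_apply, Fintype.sum_prod_type, Pi.single_apply, hw.eq_iff, (huw _ _).symm]

end Boundary

section Square

/-- The pair `ij` in `{13, 23, 14, 24}` as a pair of elements of `Fin 4`. -/
def indexPair (p : Fin 2 × Fin 2) : Fin 4 × Fin 4 := (emb1 p.1, emb2 p.2)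

lemma indexPair_injective : Function.Injective indexPair := by decide

open scoped Pointwise in
lemma V_le_stabilizer_range_indexPair :
    V ≤ MulAction.stabilizer (Equiv.Perm (Fin 4)) (Set.range indexPair) := by
  rw [V, Subgroup.closure_le]
  rintro g (rfl | rfl) <;> rw [SetLike.mem_coe, MulAction.mem_stabilizer_set] <;> decide

lemma V_smul_mem_range_indexPair (g : V) :
    ∀ x ∈ Set.range indexPair, g • x ∈ Set.range indexPair := fun x =>
  (MulAction.mem_stabilizer_set.mp (V_le_stabilizer_range_indexPair g.2) x).mpr

/-- The action of `V` on the index pairs `{13, 23, 14, 24}`, by `g · ij = g(i)g(j)`. -/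
noncomputable def pairPerm : V →* Equiv.Perm (Fin 2 × Fin 2) :=
  permHomOfInjective indexPair indexPair_injective V_smul_mem_range_indexPair

lemma indexPair_pairPerm (g : V) (p : Fin 2 × Fin 2) :
    indexPair (pairPerm g p) = g • indexPair p :=
  apply_permHomOfInjective indexPair_injective V_smul_mem_range_indexPair g p

/-- The action of `V` on `Q`, by `g · e_{ij} = e_{g(i)g(j)}`. -/
noncomputable def actionQ : V →* ((Fin 2 × Fin 2 → ℤ) ≃ₗ[ℤ] (Fin 2 × Fin 2 → ℤ)) :=
  (permRep ℤ).comp pairPerm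

lemma actionQ_eQ {g : V} {p q : Fin 2 × Fin 2}
    (h₁ : (g : Equiv.Perm (Fin 4)) (emb1 p.1) = emb1 q.1)
    (h₂ : (g : Equiv.Perm (Fin 4)) (emb2 p.2) = emb2 q.2) : actionQ g (eQ p) = eQ q := by
  have hpq : pairPerm g p = q :=
    indexPair_injective ((indexPair_pairPerm g p).trans (Prod.ext h₁ h₂))
  rw [← hpq]
  exact permRep_single ℤ (pairPerm g) p 1

/-- The map `π : Q → ℤ⁴`, `e_{ij} ↦ eᵢ - eⱼ`, as the boundary map of the complete bipartite graph on
`{1, 2}` and `{3, 4}`. -/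
def squareBoundary : (Fin 2 × Fin 2 → ℤ) →ₗ[ℤ] (Fin 4 → ℤ) :=
  boundary ℤ (fun p => emb1 p.1) (fun p => emb2 p.2)

lemma squareBoundary_comp_actionQ (g : V) :
    squareBoundary ∘ₗ (actionQ g).toLinearMap =
      LinearMap.funLeft ℤ ℤ ⇑((g : Equiv.Perm (Fin 4))⁻¹) ∘ₗ squareBoundary := by
  have hfst (p : Fin 2 × Fin 2) : emb1 (pairPerm g p).1 = (g : Equiv.Perm (Fin 4)) (emb1 p.1) :=
    congrArg Prod.fst (indexPair_pairPerm g p)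
  have hsnd (p : Fin 2 × Fin 2) : emb2 (pairPerm g p).2 = (g : Equiv.Perm (Fin 4)) (emb2 p.2) :=
    congrArg Prod.snd (indexPair_pairPerm g p)
  rw [← permRep_toLinearMap]
  exact boundary_comp_permRep hfst hsnd

lemma range_squareBoundary : LinearMap.range squareBoundary = Nlat := by
  have hedge (p : Fin 2 × Fin 2) :
      Relation.EqvGen (fun a b => ∃ p : Fin 2 × Fin 2, emb1 p.1 = a ∧ emb2 p.2 = b)
        (emb1 p.1) (emb2 p.2) := .rel _ _ ⟨p, rfl, rfl⟩
  refine range_boundary_eq_ker_sum 0 fun x => ?_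
  fin_cases x
  · exact .refl _
  · exact (hedge (1, 0)).trans _ _ _ (hedge (0, 0)).symm
  · exact (hedge (0, 0)).symm
  · exact (hedge (0, 1)).symm

/-- The fundamental cycle `e₁₃ - e₂₃ - e₁₄ + e₂₄` of the graph, which is `φ(1)`. -/
def squareCycle : Fin 2 × Fin 2 → ℤ := eQ (0, 0) - eQ (1, 0) - eQ (0, 1) + eQ (1, 1)

lemma squareCycle_ne_zero : squareCycle ≠ 0 := by
  unfold squareCycle eQ
  decide

lemma eq_smul_squareCycle {f : Fin 2 × Fin 2 → ℤ} (hrow : ∀ i, ∑ j, f (i, j) = 0)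
    (hcol : ∑ i, f (i, 0) = 0) : f = f (0, 0) • squareCycle := by
  simp only [Fin.sum_univ_two] at hrow hcol
  have h₀₁ : f (0, 1) = -f (0, 0) := by linarith [hrow 0]
  have h₁₀ : f (1, 0) = -f (0, 0) := by linarith [hcol]
  have h₁₁ : f (1, 1) = f (0, 0) := by linarith [hrow 1]
  ext ⟨i, j⟩
  fin_cases i <;> fin_cases j <;> simp [squareCycle, eQ, h₀₁, h₁₀, h₁₁]

lemma ker_squareBoundary : LinearMap.ker squareBoundary = Submodule.span ℤ {squareCycle} := by
  have hdisj : ∀ i j, emb1 i ≠ emb2 j := by decide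
  apply le_antisymm
  · intro f hf
    have hzero (x : Fin 4) : squareBoundary f x = 0 := congrFun hf x
    refine Submodule.mem_span_singleton.mpr ⟨f (0, 0), (eq_smul_squareCycle ?_ ?_).symm⟩
    · exact fun i => (boundary_bipartite_apply_left (by decide) hdisj f i).symm.trans (hzero _)
    · exact neg_eq_zero.mp
        ((boundary_bipartite_apply_right (by decide) hdisj f 0).symm.trans (hzero _))
  · rw [Submodule.span_singleton_le_iff_mem, LinearMap.mem_ker]
    simp [squareBoundary, squareCycle, eQ, boundary_single]

lemma actionQ_squareCycle_of_mem_generators {g : V}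
    (hg : (g : Equiv.Perm (Fin 4)) ∈ ({Equiv.swap 0 1, Equiv.swap 2 3} : Set _)) :
    actionQ g squareCycle = -squareCycle := by
  obtain ⟨g, hgV⟩ := g
  simp only [squareCycle, map_add, map_sub]
  rcases hg with rfl | rfl
  · have hact (p : Fin 2 × Fin 2) : actionQ ⟨Equiv.swap 0 1, hgV⟩ (eQ p) = eQ (p.1 + 1, p.2) :=
      actionQ_eQ ((by decide : ∀ i, Equiv.swap 0 1 (emb1 i) = emb1 (i + 1)) p.1)
        ((by decide : ∀ j, Equiv.swap 0 1 (emb2 j) = emb2 j) p.2)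
    simp only [hact]
    change eQ (1, 0) - eQ (0, 0) - eQ (1, 1) + eQ (0, 1) = _
    abel
  · have hact (p : Fin 2 × Fin 2) : actionQ ⟨Equiv.swap 2 3, hgV⟩ (eQ p) = eQ (p.1, p.2 + 1) :=
      actionQ_eQ ((by decide : ∀ i, Equiv.swap 2 3 (emb1 i) = emb1 i) p.1)
        ((by decide : ∀ j, Equiv.swap 2 3 (emb2 j) = emb2 (j + 1)) p.2)
    simp only [hact]
    change eQ (0, 1) - eQ (1, 1) - eQ (0, 0) + eQ (1, 0) = _
    abel

lemma sign_of_mem_generators {g : Equiv.Perm (Fin 4)}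
    (hg : g ∈ ({Equiv.swap 0 1, Equiv.swap 2 3} : Set _)) : sign g = -1 := by
  rcases hg with rfl | rfl <;> exact Equiv.Perm.sign_swap (by decide)

lemma actionQ_squareCycle (g : V) :
    actionQ g squareCycle = (sign (g : Equiv.Perm (Fin 4)) : ℤ) • squareCycle :=
  apply_eq_smul_of_closure_eq_top actionQ (sign.comp V.subtype)
    (Subgroup.closure_closure_coe_preimage (k := {Equiv.swap 0 1, Equiv.swap 2 3}))
    (fun s hs => by
      simp [actionQ_squareCycle_of_mem_generators hs, sign_of_mem_generators hs]) g

end Square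

/-- With `φ : ℤ → Q`, `φ(1) = e₁₃ - e₂₃ - e₁₄ + e₂₄` and `π : Q → ℤ⁴`,
`π(e_{ij}) = eᵢ - eⱼ`, the sequence `0 → ℤ → Q → N → 0` is exact: `φ` is injective, the range
of `π` is exactly `N`, and `ker π = im φ`. Moreover, letting `V = ⟨(1 2),(3 4)⟩` act
`ℤ`-linearly on `Q` by `g ⬝ e_{ij} = e_{g(i)g(j)}` and on `ℤ⁴` by permuting coordinates,
`π` is `V`-equivariant, and `g ⬝ φ(1) = sgn(g) ⬝ φ(1)` for every `g ∈ V`. -/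
theorem exact_sequence_of_lattices :
    ∃ (ρ : V →* ((Fin 2 × Fin 2 → ℤ) ≃ₗ[ℤ] (Fin 2 × Fin 2 → ℤ)))
      (π : (Fin 2 × Fin 2 → ℤ) →ₗ[ℤ] (Fin 4 → ℤ))
      (φ : ℤ →ₗ[ℤ] (Fin 2 × Fin 2 → ℤ)),
      -- the action: `g ⬝ e_{ij} = e_{g(i)g(j)}`
      (∀ g : V, ∀ p q : Fin 2 × Fin 2,
        (g : Equiv.Perm (Fin 4)) (emb1 p.1) = emb1 q.1 →
        (g : Equiv.Perm (Fin 4)) (emb2 p.2) = emb2 q.2 →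
        ρ g (eQ p) = eQ q) ∧
      -- `π (e_{ij}) = eᵢ - eⱼ`
      (∀ p : Fin 2 × Fin 2,
        π (eQ p) = Pi.single (emb1 p.1) 1 - Pi.single (emb2 p.2) 1) ∧
      -- `φ (1) = e₁₃ - e₂₃ - e₁₄ + e₂₄`
      φ 1 = eQ (0, 0) - eQ (1, 0) - eQ (0, 1) + eQ (1, 1) ∧
      -- exactness of `0 → ℤ → Q → N → 0`
      Function.Injective φ ∧
      LinearMap.range π = Nlat ∧
      LinearMap.ker π = LinearMap.range φ ∧
      -- `π` is `V`-equivariant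
      (∀ g : V, π.comp (ρ g).toLinearMap =
        (LinearMap.funLeft ℤ ℤ ⇑((g : Equiv.Perm (Fin 4))⁻¹)).comp π) ∧
      -- `g ⬝ φ(1) = sgn(g) ⬝ φ(1)`
      (∀ g : V, ρ g (φ 1) =
        ((Equiv.Perm.sign (g : Equiv.Perm (Fin 4)) : ℤˣ) : ℤ) • φ 1) := by
  have hφ : LinearMap.toSpanSingleton ℤ _ squareCycle 1 = squareCycle := one_smul ℤ _
  refine ⟨actionQ, squareBoundary, LinearMap.toSpanSingleton ℤ _ squareCycle,
    fun _ _ _ => actionQ_eQ, boundary_single _ _, hφ, smul_left_injective ℤ squareCycle_ne_zero,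
    range_squareBoundary, ?_, squareBoundary_comp_actionQ, ?_⟩
  · rw [ker_squareBoundary, LinearMap.range_toSpanSingleton]
  · simpa only [hφ] using actionQ_squareCycle
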